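/- The integrated Schrödinger representation turns Heisenberg-group convolution into operator composition: for ℏ > 0, k₁, k₂ ∈ L¹(ℝ³) and f ∈ L²(ℝ,ℂ), σ_ℏ(k₁*k₂)f = σ_ℏ(k₁)(σ_ℏ(k₂)f), where σ_ℏ(k)f denotes the Bochner integral ∫_{ℝ³} k(g)·(σ_ℏ(g)f) dg in L²(ℝ,ℂ) and * is convolution over the Heisenberg group. -/

import Mathlib

open MeasureTheory

/-- The multiplication law of the one-dimensional Heisenberg group `H¹ = ℝ³`:
`(s,x,y)·(s',x',y') = (s+s'+(xy'−yx')/2, x+x', y+y')`. -/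
noncomputable def heisMul (g g' : ℝ × ℝ × ℝ) : ℝ × ℝ × ℝ :=
  (g.1 + g'.1 + (g.2.1 * g'.2.2 - g.2.2 * g'.2.1) / 2, g.2.1 + g'.2.1, g.2.2 + g'.2.2)

/-- Inversion in the Heisenberg group: `(s,x,y)⁻¹ = (−s,−x,−y)`. -/
def heisInv (h : ℝ × ℝ × ℝ) : ℝ × ℝ × ℝ := (-h.1, -h.2.1, -h.2.2)

/-- Convolution over the Heisenberg group (with Lebesgue measure on `ℝ³` as
Haar measure): `(k₁*k₂)(g) = ∫_{H¹} k₁(h)·k₂(h⁻¹·g) dh`. -/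
noncomputable def heisConv (k₁ k₂ : ℝ × ℝ × ℝ → ℂ) (g : ℝ × ℝ × ℝ) : ℂ :=
  ∫ h : ℝ × ℝ × ℝ, k₁ h * k₂ (heisMul (heisInv h) g)

/-- A map into a second countable metric space is measurable as soon as its distances to all
fixed points are. -/
lemma measurable_of_measurable_edist {α E : Type*} [MeasurableSpace α] [PseudoEMetricSpace E]
    [SecondCountableTopology E] [MeasurableSpace E] [BorelSpace E] {F : α → E}
    (hF : ∀ u, Measurable fun a => edist (F a) u) : Measurable F := by
  refine measurable_of_isOpen fun U hU => ?_
  have hball : ∀ x ∈ U, ∃ ε > 0, Metric.eball x ε ⊆ U := EMetric.isOpen_iff.1 hU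
  choose! ε hε hsub using hball
  obtain ⟨T, hT, hcover⟩ := TopologicalSpace.isOpen_iUnion_countable
    (fun x : U => Metric.eball (x : E) (ε x)) fun _ => Metric.isOpen_eball
  have hU_eq : U = ⋃ x ∈ T, Metric.eball (x : E) (ε x) := by
    rw [hcover]
    refine Set.Subset.antisymm (fun x hx => ?_) (Set.iUnion_subset fun x => hsub x x.2)
    exact Set.mem_iUnion.2 ⟨⟨x, hx⟩, Metric.mem_eball_self (hε x hx)⟩
  rw [hU_eq, Set.preimage_iUnion₂]
  exact MeasurableSet.biUnion hT fun x _ => measurableSet_lt (hF x) measurable_const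

/-- A jointly measurable kernel whose sections represent elements of `Lp` defines a measurable
`Lp`-valued map. -/
lemma stronglyMeasurable_toLp_of_uncurry {α : Type*} [MeasurableSpace α]
    {F : α → Lp ℂ 2 (volume : Measure ℝ)} {G : α → ℝ → ℂ}
    (hG : Measurable (Function.uncurry G)) (hFG : ∀ a, F a =ᵐ[volume] G a) :
    StronglyMeasurable F := by
  borelize ↥(Lp ℂ 2 (volume : Measure ℝ))
  have : Fact ((2 : ENNReal) ≠ ⊤) := ⟨by norm_num⟩
  refine Measurable.stronglyMeasurable (measurable_of_measurable_edist fun u => ?_)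
  have hedist : ∀ a, edist (F a) u = (∫⁻ t, ‖G a t - u t‖ₑ ^ (2 : ℝ)) ^ (1 / (2 : ℝ)) := by
    intro a
    rw [Lp.edist_def, eLpNorm_congr_ae ((hFG a).sub (Filter.EventuallyEq.refl _ u)),
      eLpNorm_eq_lintegral_rpow_enorm_toReal (by norm_num) (by norm_num)]
    simp
  simp_rw [hedist]
  refine Measurable.pow_const (Measurable.lintegral_prod_right' (f := fun p : α × ℝ =>
    ‖G p.1 p.2 - u p.2‖ₑ ^ (2 : ℝ)) ?_) _
  have hu : Measurable (u : ℝ → ℂ) := (Lp.stronglyMeasurable u).measurable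
  exact ((hG.sub (hu.comp measurable_snd)).enorm).pow_const _

lemma measurable_heisMul : Measurable fun p : (ℝ × ℝ × ℝ) × (ℝ × ℝ × ℝ) => heisMul p.1 p.2 := by
  unfold heisMul
  fun_prop

lemma measurable_heisInv : Measurable heisInv := by
  unfold heisInv
  fun_prop

lemma heisMul_heisInv_cancel_left (h g : ℝ × ℝ × ℝ) : heisMul h (heisMul (heisInv h) g) = g := by
  ext <;> simp [heisMul, heisInv]; ring

/-- Lebesgue measure is invariant under left translations of the Heisenberg group. -/
lemma measurePreserving_heisMul_left (h : ℝ × ℝ × ℝ) :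
    MeasurePreserving (heisMul h) volume volume := by
  have hshear : MeasurePreserving
      (fun p : (ℝ × ℝ) × ℝ =>
        (h.2 + p.1, (h.1 + (h.2.1 * p.1.2 - h.2.2 * p.1.1) / 2) + p.2))
      (volume.prod volume) (volume.prod volume) :=
    (measurePreserving_add_left volume h.2).skew_product
      (g := fun q s => (h.1 + (h.2.1 * q.2 - h.2.2 * q.1) / 2) + s) (by fun_prop)
      (Filter.Eventually.of_forall fun q => (measurePreserving_add_left volume _).map_eq)
  have hswap := (Measure.measurePreserving_swap.comp hshear).comp
    (Measure.measurePreserving_swap (μ := (volume : Measure ℝ)) (ν := (volume : Measure (ℝ × ℝ))))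
  have hheisMul : heisMul h = (Prod.swap ∘ fun p : (ℝ × ℝ) × ℝ =>
      (h.2 + p.1, (h.1 + (h.2.1 * p.1.2 - h.2.2 * p.1.1) / 2) + p.2)) ∘ Prod.swap := by
    funext g
    ext <;> simp [heisMul]
    ring
  rw [hheisMul]
  exact hswap

lemma measurePreserving_prod_heisMul_heisInv :
    MeasurePreserving
      (fun p : (ℝ × ℝ × ℝ) × (ℝ × ℝ × ℝ) => (p.1, heisMul (heisInv p.1) p.2))
      (volume.prod volume) (volume.prod volume) :=
  (MeasurePreserving.id volume).skew_product (g := fun h g => heisMul (heisInv h) g)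
    (measurable_heisMul.comp ((measurable_heisInv.comp measurable_fst).prodMk measurable_snd))
    (Filter.Eventually.of_forall fun h => (measurePreserving_heisMul_left (heisInv h)).map_eq)

/-- The operators given by the Schrödinger formula form a representation of the Heisenberg
group. -/
lemma schrodinger_heisMul (ℏ : ℝ) (hℏ : 0 < ℏ)
    (σ : ℝ × ℝ × ℝ → (Lp ℂ 2 (volume : Measure ℝ) ≃ₗᵢ[ℂ] Lp ℂ 2 (volume : Measure ℝ)))
    (hσ : ∀ (s x y : ℝ) (f : Lp ℂ 2 (volume : Measure ℝ)),
      (σ (s, x, y) f : ℝ → ℂ) =ᵐ[volume] fun t : ℝ =>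
        Complex.exp (Complex.I *
            ((2 * s * ℏ - Real.sqrt (2 * ℏ) * y * t + ℏ * x * y : ℝ) : ℂ)) *
          (f : ℝ → ℂ) (t - Real.sqrt (2 * ℏ) * x))
    (g h : ℝ × ℝ × ℝ) (f : Lp ℂ 2 (volume : Measure ℝ)) :
    σ (heisMul g h) f = σ g (σ h f) := by
  obtain ⟨s, x, y⟩ := g
  obtain ⟨s', x', y'⟩ := h
  refine Lp.ext ?_
  have htranslate := (measurePreserving_sub_right volume
    (Real.sqrt (2 * ℏ) * x)).quasiMeasurePreserving.ae (hσ s' x' y' f)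
  have hsq : Real.sqrt (2 * ℏ) * Real.sqrt (2 * ℏ) = 2 * ℏ := Real.mul_self_sqrt (by positivity)
  filter_upwards [hσ _ _ _ f, hσ s x y (σ (s', x', y') f), htranslate] with t h₁ h₂ h₃
  rw [h₂, h₃, heisMul, h₁, ← mul_assoc, ← Complex.exp_add, ← mul_add, ← Complex.ofReal_add]
  congr 1
  · congr 3
    linear_combination (-(x * y')) * hsq
  · congr 1
    ring

lemma stronglyMeasurable_schrodinger (ℏ : ℝ)
    (σ : ℝ × ℝ × ℝ → (Lp ℂ 2 (volume : Measure ℝ) ≃ₗᵢ[ℂ] Lp ℂ 2 (volume : Measure ℝ)))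
    (hσ : ∀ (s x y : ℝ) (f : Lp ℂ 2 (volume : Measure ℝ)),
      (σ (s, x, y) f : ℝ → ℂ) =ᵐ[volume] fun t : ℝ =>
        Complex.exp (Complex.I *
            ((2 * s * ℏ - Real.sqrt (2 * ℏ) * y * t + ℏ * x * y : ℝ) : ℂ)) *
          (f : ℝ → ℂ) (t - Real.sqrt (2 * ℏ) * x))
    (f : Lp ℂ 2 (volume : Measure ℝ)) :
    StronglyMeasurable fun g => σ g f := by
  have hf : Measurable (f : ℝ → ℂ) := (Lp.stronglyMeasurable f).measurable
  refine stronglyMeasurable_toLp_of_uncurry ?_ fun g => hσ g.1 g.2.1 g.2.2 f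
  unfold Function.uncurry
  fun_prop

/-- The integrated Schrödinger representation turns
Heisenberg-group convolution into operator composition: if `σ` is the family of
unitary operators on `L²(ℝ,ℂ)` given by the Schrödinger formula
`[σ_ℏ(s,x,y)f](t) = exp(i(2sℏ − √(2ℏ)·y·t + ℏ·x·y))·f(t − √(2ℏ)·x)`, then for
`k₁, k₂ ∈ L¹(ℝ³)` and `f ∈ L²(ℝ,ℂ)` one has `σ_ℏ(k₁*k₂)f = σ_ℏ(k₁)(σ_ℏ(k₂)f)`,
where `σ_ℏ(k)f = ∫_{ℝ³} k(g)·(σ_ℏ(g)f) dg` (Bochner integral). -/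
theorem integrated_schrodinger_representation_multiplicative
    (ℏ : ℝ) (hℏ : 0 < ℏ)
    (σ : ℝ × ℝ × ℝ → (Lp ℂ 2 (volume : Measure ℝ) ≃ₗᵢ[ℂ] Lp ℂ 2 (volume : Measure ℝ)))
    (hσ : ∀ (s x y : ℝ) (f : Lp ℂ 2 (volume : Measure ℝ)),
      (σ (s, x, y) f : ℝ → ℂ) =ᵐ[volume] fun t : ℝ =>
        Complex.exp (Complex.I *
            ((2 * s * ℏ - Real.sqrt (2 * ℏ) * y * t + ℏ * x * y : ℝ) : ℂ)) *
          (f : ℝ → ℂ) (t - Real.sqrt (2 * ℏ) * x))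
    (k₁ k₂ : ℝ × ℝ × ℝ → ℂ)
    (hk₁ : Integrable k₁ (volume : Measure (ℝ × ℝ × ℝ)))
    (hk₂ : Integrable k₂ (volume : Measure (ℝ × ℝ × ℝ)))
    (f : Lp ℂ 2 (volume : Measure ℝ)) :
    ∫ g : ℝ × ℝ × ℝ, heisConv k₁ k₂ g • (σ g f) =
      ∫ g : ℝ × ℝ × ℝ, k₁ g • σ g (∫ g' : ℝ × ℝ × ℝ, k₂ g' • σ g' f) := by
  have hmeas := stronglyMeasurable_schrodinger ℏ σ hσ f
  have hint : Integrable (fun p : (ℝ × ℝ × ℝ) × (ℝ × ℝ × ℝ) =>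
      (k₁ p.1 * k₂ (heisMul (heisInv p.1) p.2)) • σ p.2 f) (volume.prod volume) := by
    have hprod : Integrable (fun p : (ℝ × ℝ × ℝ) × (ℝ × ℝ × ℝ) =>
        k₁ p.1 * k₂ (heisMul (heisInv p.1) p.2)) (volume.prod volume) :=
      measurePreserving_prod_heisMul_heisInv.integrable_comp_of_integrable (hk₁.mul_prod hk₂)
    refine (hprod.norm.mul_const ‖f‖).mono' (hprod.aestronglyMeasurable.smul
      (hmeas.comp_measurable measurable_snd).aestronglyMeasurable) ?_
    exact Filter.Eventually.of_forall fun p => by simp [norm_smul]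
  calc ∫ g : ℝ × ℝ × ℝ, heisConv k₁ k₂ g • (σ g f)
      = ∫ g : ℝ × ℝ × ℝ, ∫ h : ℝ × ℝ × ℝ, (k₁ h * k₂ (heisMul (heisInv h) g)) • σ g f := by
        simp_rw [integral_smul_const, heisConv]
    _ = ∫ h : ℝ × ℝ × ℝ, ∫ g : ℝ × ℝ × ℝ, (k₁ h * k₂ (heisMul (heisInv h) g)) • σ g f :=
        (integral_integral_swap hint).symm
    _ = ∫ g : ℝ × ℝ × ℝ, k₁ g • σ g (∫ g' : ℝ × ℝ × ℝ, k₂ g' • σ g' f) := by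
        refine integral_congr_ae (Filter.Eventually.of_forall fun h => ?_)
        have hk₂σ : Integrable fun g => k₂ g • σ g f :=
          (hk₂.norm.mul_const ‖f‖).mono' (hk₂.aestronglyMeasurable.smul
            hmeas.aestronglyMeasurable) (Filter.Eventually.of_forall fun g => by simp [norm_smul])
        have htranslate : ∫ g, k₂ (heisMul (heisInv h) g) • σ (heisMul (heisInv h) g) f =
            ∫ g, k₂ g • σ g f := by
          have hmp := measurePreserving_heisMul_left (heisInv h)
          rw [← integral_map (f := fun g => k₂ g • σ g f) hmp.measurable.aemeasurable
            (hmp.map_eq.symm ▸ hk₂σ.aestronglyMeasurable), hmp.map_eq]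
        have hcocycle : ∀ g, σ g f = σ h (σ (heisMul (heisInv h) g) f) := fun g => by
          rw [← schrodinger_heisMul ℏ hℏ σ hσ, heisMul_heisInv_cancel_left]
        have hcomm := (σ h).toContinuousLinearEquiv.integral_comp_comm
          (μ := volume) fun g => k₂ (heisMul (heisInv h) g) • σ (heisMul (heisInv h) g) f
        simp only [LinearIsometryEquiv.coe_toContinuousLinearEquiv, map_smul, ← hcocycle] at hcomm
        simp only [mul_smul, integral_smul]
        rw [hcomm, htranslate]
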